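/- The derivation module D(𝒜₂₃₉) of the central hyperplane arrangement 𝒜₂₃₉ in ℂ⁴ with defining equation Q₂₃₉ = x·y·z·w·(x+y+z)·(x+y+w)·(x+z+w)·(y+z+w) is not a free module over S = ℂ[x,y,z,w]. -/

import Mathlib

/-!
If `D(𝒜)` is free, its rank is at most `4`, so for every point `p` the fibre of `D(𝒜)` at `p` has
dimension at most `4`. Multiplication by the forms that do not vanish at `p`, which are units near
`p`, shows that this fibre depends only on the subarrangement `𝒜_p` of hyperplanes through `p`. For
`p = (0,0,0,1)`, `𝒜_p` consists of the kernels of `x`, `y`, `z` and `x + y + z`.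

Write `θ(α_k) = α_k q_k` for a derivation of `𝒜_p`. The relation `α₀ = c₁α₁ + c₂α₂ + c₃α₃` gives
`∑ cₖαₖ(qₖ - q₀) = 0`, so `(qₖ - q₀)ₖ` is a Koszul syzygy `(cₖαₖ)ₖ × u`. The values at `p` of `q₀`,
of `u₁, u₂, u₃` and of the component of `θ` along `p` are five independent functionals on the fibre,
a contradiction.
-/

open MvPolynomial

noncomputable section

/-- The polynomial ring `S = ℂ[x,y,z,w]`, with `x = X 0`, `y = X 1`, `z = X 2`, `w = X 3`. -/
abbrev S4 : Type := MvPolynomial (Fin 4) ℂ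

/-- The linear form `c₀·x + c₁·y + c₂·z + c₃·w` with coefficient vector `c`. -/
noncomputable def linForm (c : Fin 4 → ℂ) : S4 := ∑ i, C (c i) * X i

/-- A polynomial derivation `θ = a₁∂ₓ + a₂∂_y + a₃∂_z + a₄∂_w` of `S` is identified with
its coefficient tuple `a : Fin 4 → S`; the linear map `derMap f` sends `a` to `θ(f)`. -/
noncomputable def derMap (f : S4) : (Fin 4 → S4) →ₗ[S4] S4 where
  toFun a := ∑ i, a i * pderiv i f
  map_add' a b := by simp [add_mul, Finset.sum_add_distrib]
  map_smul' c a := by simp [Finset.mul_sum, mul_assoc]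

/-- The derivation module `D(𝒜)` of the central arrangement whose hyperplanes are the kernels
of the linear forms `linForm (α H)`: all derivations `θ` with `θ(α_H) ∈ S·α_H` for every `H`. -/
noncomputable def derivModule {ι : Type} (α : ι → (Fin 4 → ℂ)) :
    Submodule S4 (Fin 4 → S4) :=
  ⨅ H, Submodule.comap (derMap (linForm (α H))) (Ideal.span {linForm (α H)})

end

/-- The coefficient vectors of the eight linear factors of Q = xyzw(x+y+z)(x+y+w)(x+z+w)(y+z+w), defining the rigid Cynk–Szemberg octic arrangement 𝒜₂₃₉ ⊂ ℙ³. -/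
noncomputable def A239 : Fin 8 → (Fin 4 → ℂ) :=
  ![![1, 0, 0, 0],
    ![0, 1, 0, 0],
    ![0, 0, 1, 0],
    ![0, 0, 0, 1],
    ![1, 1, 1, 0],
    ![1, 1, 0, 1],
    ![1, 0, 1, 1],
    ![0, 1, 1, 1]]

open Matrix Module

section Algebra

theorem finrank_le_finrank_of_semilinear_surjective {R K M V : Type*} [CommRing R] [Ring K]
    [StrongRankCondition K] [AddCommGroup M] [Module R M] [Module.Free R M] [Module.Finite R M]
    [AddCommGroup V] [Module K V] {σ : R →+* K} (f : M →ₛₗ[σ] V) (hf : Function.Surjective f) :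
    finrank K V ≤ finrank R M := by
  have := nontrivial_of_invariantBasisNumber K
  have := σ.domain_nontrivial
  let b := finBasis R M
  have hspan : Submodule.span K (Set.range (f ∘ b)) = ⊤ := by
    refine eq_top_iff.2 fun w _ ↦ ?_
    obtain ⟨m, rfl⟩ := hf w
    rw [← b.sum_repr m, map_sum]
    refine Submodule.sum_mem _ fun k _ ↦ ?_
    rw [map_smulₛₗ]
    exact Submodule.smul_mem _ _ (Submodule.subset_span ⟨k, rfl⟩)
  calc finrank K V = (Set.range (f ∘ b)).finrank K := by rw [Set.finrank, hspan, finrank_top]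
    _ ≤ finrank R M := by simpa using finrank_range_le_card (R := K) (f ∘ b)

/-- The first-order part `m ↦ φ (D (f m))` along `D` of a linear `f : M → A` with `φ ∘ f = 0`, which
makes the Leibniz correction `φ (f m) * φ (D a)` disappear and the map `φ`-semilinear. -/
noncomputable def firstOrderPart {R A B M : Type*} [CommSemiring R] [CommSemiring A] [Algebra R A]
    [Semiring B] [AddCommMonoid M] [Module A M] (φ : A →+* B) (D : Derivation R A A)
    (f : M →ₗ[A] A) (hf : ∀ m, φ (f m) = 0) : M →ₛₗ[φ] B where
  toFun m := φ (D (f m))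
  map_add' m n := by simp
  map_smul' a m := by simp [hf]

theorem cross_apply_add_one {R : Type*} [CommRing R] (a b : Fin 3 → R) (k : Fin 3) :
    (a ⨯₃ b) (k + 1) = a (k + 2) * b k - a k * b (k + 2) := by
  fin_cases k <;> rfl

theorem exists_dual_family_of_linearIndependent {K m n : Type*} [Field K] [Finite m]
    [DecidableEq m] [Fintype n] {b : m → n → K} (hb : LinearIndependent K b) :
    ∃ v : m → n → K, ∀ k l, b k ⬝ᵥ v l = if k = l then 1 else 0 := by
  classical
  obtain ⟨g, hg⟩ := LinearMap.exists_leftInverse_of_injective _ (LinearMap.ker_eq_bot.2 hb)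
  refine ⟨fun l i ↦ g (Pi.single i 1) l, fun k l ↦ ?_⟩
  have hgb : g (b k) = Finsupp.single k 1 := by
    simpa using LinearMap.congr_fun hg (Finsupp.single k 1)
  calc b k ⬝ᵥ (fun i ↦ g (Pi.single i 1) l) = g (∑ i, b k i • Pi.single i 1) l := by
        simp [dotProduct, Finsupp.finsetSum_apply]
    _ = if k = l then 1 else 0 := by rw [← pi_eq_sum_univ', hgb, Finsupp.single_apply]

end Algebra

section LinearForms

theorem eval_linForm (p c : Fin 4 → ℂ) : eval p (linForm c) = c ⬝ᵥ p := by
  simp [linForm, dotProduct]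

theorem linForm_ne_zero {c : Fin 4 → ℂ} (hc : c ≠ 0) : linForm c ≠ 0 := by
  refine fun h ↦ hc (dotProduct_eq_zero c fun w ↦ ?_)
  rw [← eval_linForm, h, map_zero]

theorem linForm_sum_smul {κ : Type*} [Fintype κ] (c : κ → ℂ) (b : κ → Fin 4 → ℂ) :
    linForm (∑ k, c k • b k) = ∑ k, C (c k) * linForm (b k) := by
  simp only [linForm, Finset.sum_apply, Pi.smul_apply, smul_eq_mul, map_sum, map_mul,
    Finset.sum_mul, Finset.mul_sum, mul_assoc]
  exact Finset.sum_comm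

theorem derMap_linForm (c : Fin 4 → ℂ) (θ : Fin 4 → S4) :
    derMap (linForm c) θ = ∑ m, C (c m) * θ m := by
  simp [derMap, linForm, pderiv_X, Pi.single_apply, mul_comm]

theorem derMap_linForm_sum_smul {κ : Type*} [Fintype κ] (c : κ → ℂ) (b : κ → Fin 4 → ℂ)
    (θ : Fin 4 → S4) :
    derMap (linForm (∑ k, c k • b k)) θ = ∑ k, C (c k) * derMap (linForm (b k)) θ := by
  simp only [derMap_linForm, Finset.sum_apply, Pi.smul_apply, smul_eq_mul, map_sum, map_mul,
    Finset.sum_mul, Finset.mul_sum, mul_assoc]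
  exact Finset.sum_comm

/-- The derivation of `S` differentiating in the constant direction `v`. -/
noncomputable def directionalDeriv (v : Fin 4 → ℂ) : Derivation ℂ S4 S4 :=
  mkDerivation ℂ fun m ↦ C (v m)

theorem derMap_linForm_C (v c : Fin 4 → ℂ) :
    derMap (linForm c) (fun m ↦ C (v m)) = C (c ⬝ᵥ v) := by
  simp [derMap_linForm, dotProduct]

theorem directionalDeriv_linForm (v c : Fin 4 → ℂ) :
    directionalDeriv v (linForm c) = C (c ⬝ᵥ v) := by
  simp [directionalDeriv, linForm, dotProduct]

end LinearForms

section DerivModule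

variable {ι : Type} {α : ι → Fin 4 → ℂ}

theorem mem_derivModule {θ : Fin 4 → S4} :
    θ ∈ derivModule α ↔ ∀ H, linForm (α H) ∣ derMap (linForm (α H)) θ := by
  simp [derivModule, Submodule.mem_iInf, Ideal.mem_span_singleton]

theorem derivModule_le_derivModule_comp {κ : Type} (e : κ → ι) :
    derivModule α ≤ derivModule (α ∘ e) :=
  fun _ hθ ↦ mem_derivModule.2 fun k ↦ mem_derivModule.1 hθ (e k)

theorem prod_linForm_smul_mem_derivModule {κ : Type} {e : κ → ι} {s : Finset ι}
    (hs : ∀ H ∉ s, H ∈ Set.range e) {θ : Fin 4 → S4} (hθ : θ ∈ derivModule (α ∘ e)) :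
    (∏ H ∈ s, linForm (α H)) • θ ∈ derivModule α := by
  refine mem_derivModule.2 fun H ↦ ?_
  rw [map_smul, smul_eq_mul]
  by_cases hH : H ∈ s
  · exact (Finset.dvd_prod_of_mem _ hH).mul_right _
  · obtain ⟨k, rfl⟩ := hs H hH
    exact (mem_derivModule.1 hθ k).mul_left _

theorem finrank_le_four_of_free_derivModule [Finite ι] [Module.Free S4 (derivModule α)]
    {p : Fin 4 → ℂ} {κ : Type} {e : κ → ι} (he : ∀ H ∉ Set.range e, α H ⬝ᵥ p ≠ 0)
    {V : Type*} [AddCommGroup V] [Module ℂ V] (T : derivModule (α ∘ e) →ₛₗ[eval p] V)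
    (hT : Function.Surjective T) : finrank ℂ V ≤ 4 := by
  classical
  have := Fintype.ofFinite ι
  let s : Finset ι := {H | H ∉ Set.range e}
  let ρ : S4 := ∏ H ∈ s, linForm (α H)
  have hρ : eval p ρ ≠ 0 := by
    rw [map_prod, Finset.prod_ne_zero_iff]
    exact fun H hH ↦ eval_linForm p (α H) ▸ he H (Finset.mem_filter.1 hH).2
  let res := T.comp (Submodule.inclusion (derivModule_le_derivModule_comp (α := α) e))
  have hres : Function.Surjective res := by
    intro w
    obtain ⟨θ, hθ⟩ := hT ((eval p ρ)⁻¹ • w)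
    refine ⟨⟨ρ • θ, prod_linForm_smul_mem_derivModule (by simp [s]) θ.2⟩, ?_⟩
    change T (ρ • θ) = w
    rw [map_smulₛₗ, hθ, smul_inv_smul₀ hρ]
  calc finrank ℂ V ≤ finrank S4 (derivModule α) :=
        finrank_le_finrank_of_semilinear_surjective res hres
    _ ≤ finrank S4 (Fin 4 → S4) := Submodule.finrank_le _
    _ = 4 := by simp

/-- The logarithmic coefficient `θ(α_H) / α_H` of a derivation `θ ∈ D(𝒜)` along `H`. -/
noncomputable def logCoeff (hα : ∀ H, α H ≠ 0) (H : ι) : derivModule α →ₗ[S4] S4 :=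
  (LinearEquiv.coord S4 S4 _ (linForm_ne_zero (hα H))).toLinearMap ∘ₗ
    (derMap (linForm (α H))).restrict fun _ hθ ↦ (Submodule.mem_iInf _).1 hθ H

theorem linForm_mul_logCoeff (hα : ∀ H, α H ≠ 0) (H : ι) (θ : derivModule α) :
    linForm (α H) * logCoeff hα H θ = derMap (linForm (α H)) θ := by
  rw [mul_comm]
  exact LinearEquiv.coord_apply_smul S4 S4 _ (linForm_ne_zero (hα H)) _

theorem logCoeff_eq (hα : ∀ H, α H ≠ 0) {H : ι} {θ : derivModule α} {q : S4}
    (h : derMap (linForm (α H)) θ = linForm (α H) * q) : logCoeff hα H θ = q :=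
  mul_left_cancel₀ (linForm_ne_zero (hα H)) ((linForm_mul_logCoeff hα H θ).trans h)

variable {κ : Type*} [Fintype κ] {i : κ → ι} {j : ι} {c : κ → ℂ} {p : Fin 4 → ℂ}

theorem sum_linForm_mul_logCoeff_sub (hα : ∀ H, α H ≠ 0) (hj : α j = ∑ k, c k • α (i k))
    (θ : derivModule α) :
    ∑ k, C (c k) * (linForm (α (i k)) * (logCoeff hα (i k) θ - logCoeff hα j θ)) = 0 := by
  simp only [mul_sub, Finset.sum_sub_distrib, linForm_mul_logCoeff]
  rw [← derMap_linForm_sum_smul, ← hj, ← linForm_mul_logCoeff hα, hj, linForm_sum_smul,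
    Finset.sum_mul]
  simp [mul_assoc]

theorem eval_logCoeff_eq_of_circuit [DecidableEq κ] (hα : ∀ H, α H ≠ 0)
    (hj : α j = ∑ k, c k • α (i k)) (hc : ∀ k, c k ≠ 0) (hon : ∀ k, α (i k) ⬝ᵥ p = 0)
    {v : κ → Fin 4 → ℂ} (hv : ∀ k l, α (i k) ⬝ᵥ v l = if k = l then 1 else 0)
    (θ : derivModule α) (k : κ) :
    eval p (logCoeff hα (i k) θ) = eval p (logCoeff hα j θ) := by
  have h := congrArg (fun f ↦ eval p (directionalDeriv (v k) f))
    (sum_linForm_mul_logCoeff_sub hα hj θ)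
  simpa [directionalDeriv_linForm, eval_linForm, hon, hv, hc, sub_eq_zero, apply_ite] using h

end DerivModule

section Circuit

variable {β : Fin 4 → Fin 4 → ℂ} {c : Fin 3 → ℂ} {p : Fin 4 → ℂ} {v : Fin 3 → Fin 4 → ℂ}

theorem exists_derMap_linForm_eq (hon : ∀ k : Fin 3, β k.succ ⬝ᵥ p = 0)
    (hv : ∀ k l : Fin 3, β k.succ ⬝ᵥ v l = if k = l then 1 else 0) (q : Fin 3 → S4) (d : ℂ) :
    ∃ θ : Fin 4 → S4,
      (∀ k : Fin 3, derMap (linForm (β k.succ)) θ = linForm (β k.succ) * q k) ∧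
      ∀ m, eval p (θ m) = d * p m := by
  refine ⟨∑ k, (linForm (β k.succ) * q k) • (fun m ↦ C (v k m)) + C d • fun m ↦ C (p m),
    fun k ↦ ?_, fun m ↦ by simp [eval_linForm, hon]⟩
  simp [derMap_linForm_C, hv, hon, apply_ite]

theorem exists_logCoeff_eq_add_cross (hβ : ∀ H, β H ≠ 0) (hdep : β 0 = ∑ k, c k • β k.succ)
    (hon : ∀ k : Fin 3, β k.succ ⬝ᵥ p = 0)
    (hv : ∀ k l : Fin 3, β k.succ ⬝ᵥ v l = if k = l then 1 else 0) (g d : ℂ) (u : Fin 3 → ℂ) :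
    ∃ θ : derivModule β, logCoeff hβ 0 θ = C g ∧
      (∀ k, logCoeff hβ k.succ θ =
        C g + ((fun l ↦ C (c l) * linForm (β l.succ)) ⨯₃ fun l ↦ C (u l)) k) ∧
      ∀ m, eval p (θ.1 m) = d * p m := by
  let a : Fin 3 → S4 := fun l ↦ C (c l) * linForm (β l.succ)
  let q : Fin 3 → S4 := fun k ↦ C g + (a ⨯₃ fun l ↦ C (u l)) k
  obtain ⟨θ, hθ, hθp⟩ := exists_derMap_linForm_eq hon hv q d
  have hθ₀ : derMap (linForm (β 0)) θ = linForm (β 0) * C g :=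
    calc derMap (linForm (β 0)) θ = ∑ k, a k * q k := by
          simp only [hdep, derMap_linForm_sum_smul, hθ, a, mul_assoc]
      _ = (∑ k, a k) * C g + a ⬝ᵥ a ⨯₃ fun l ↦ C (u l) := by
          simp only [q, mul_add, Finset.sum_add_distrib, Finset.sum_mul, dotProduct]
      _ = linForm (β 0) * C g := by rw [dot_self_cross, add_zero, hdep, linForm_sum_smul]
  have hmem : θ ∈ derivModule β :=
    mem_derivModule.2 <| Fin.forall_fin_succ.2 ⟨⟨_, hθ₀⟩, fun k ↦ ⟨_, hθ k⟩⟩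
  exact ⟨⟨θ, hmem⟩, logCoeff_eq hβ hθ₀, fun k ↦ logCoeff_eq hβ (hθ k), hθp⟩

theorem directionalDeriv_cross
    (hv : ∀ k l : Fin 3, β k.succ ⬝ᵥ v l = if k = l then 1 else 0) (u : Fin 3 → ℂ) (k : Fin 3) :
    directionalDeriv (v (k + 2))
      (((fun l ↦ C (c l) * linForm (β l.succ)) ⨯₃ fun l ↦ C (u l)) (k + 1)) =
      C (c (k + 2) * u k) := by
  simp [cross_apply_add_one, directionalDeriv_linForm, hv, mul_comm]

theorem exists_surjective_semilinear_of_circuit (hβ : ∀ H, β H ≠ 0)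
    (hdep : β 0 = ∑ k, c k • β k.succ) (hc : ∀ k, c k ≠ 0) (hp : p ≠ 0)
    (hon : ∀ k : Fin 3, β k.succ ⬝ᵥ p = 0)
    (hv : ∀ k l : Fin 3, β k.succ ⬝ᵥ v l = if k = l then 1 else 0) :
    ∃ T : derivModule β →ₛₗ[eval p] ℂ × ℂ × (Fin 3 → ℂ), Function.Surjective T := by
  obtain ⟨m, hm⟩ := Function.ne_iff.1 hp
  have hlog (k : Fin 3) (θ : derivModule β) :
      eval p ((logCoeff hβ (k + 1).succ - logCoeff hβ 0) θ) = 0 := by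
    simp [eval_logCoeff_eq_of_circuit (i := Fin.succ) hβ hdep hc hon hv θ]
  -- Up to the factor `c (k + 2)`, the coordinate `k` of the Koszul vector `u` is the derivative of
  -- `q (k + 1) - q 0` in the direction dual to the form `k + 2`.
  let K (k : Fin 3) : derivModule β →ₛₗ[eval p] ℂ :=
    firstOrderPart (eval p) (directionalDeriv (v (k + 2))) _ (hlog k)
  let T : derivModule β →ₛₗ[eval p] ℂ × ℂ × (Fin 3 → ℂ) :=
    { toFun θ := (eval p (logCoeff hβ 0 θ), eval p (θ.1 m), fun k ↦ K k θ)
      map_add' θ η := by ext <;> simp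
      map_smul' f θ := by ext <;> simp }
  refine ⟨T, fun ⟨g, d, u⟩ ↦ ?_⟩
  obtain ⟨θ, hθ₀, hθ, hθm⟩ :=
    exists_logCoeff_eq_add_cross hβ hdep hon hv g (d / p m) fun k ↦ u k / c (k + 2)
  have hK (k : Fin 3) : K k θ = u k := by
    simp [K, firstOrderPart, hθ₀, hθ, directionalDeriv_cross hv, mul_div_cancel₀, hc]
  refine ⟨θ, Prod.ext ?_ <| Prod.ext ?_ <| funext hK⟩
  · simp [T, hθ₀]
  · exact (hθm m).trans (div_mul_cancel₀ d hm)

end Circuit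

theorem not_free_derivModule_of_circuit {ι : Type} [Finite ι] {α : ι → Fin 4 → ℂ}
    {e : Fin 4 → ι} {c : Fin 3 → ℂ} {p : Fin 4 → ℂ} (hp : p ≠ 0)
    (hli : LinearIndependent ℂ fun k : Fin 3 ↦ α (e k.succ))
    (hdep : α (e 0) = ∑ k : Fin 3, c k • α (e k.succ)) (hc : ∀ k, c k ≠ 0)
    (hon : ∀ k : Fin 3, α (e k.succ) ⬝ᵥ p = 0) (hoff : ∀ H ∉ Set.range e, α H ⬝ᵥ p ≠ 0) :
    ¬ Module.Free S4 (derivModule α) := by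
  intro hfree
  have h₀ : α (e 0) ≠ 0 := fun h ↦
    hc 0 (Fintype.linearIndependent_iff.1 hli c (hdep.symm.trans h) 0)
  obtain ⟨v, hv⟩ := exists_dual_family_of_linearIndependent hli
  obtain ⟨T, hT⟩ := exists_surjective_semilinear_of_circuit (β := α ∘ e)
    (Fin.forall_fin_succ.2 ⟨h₀, hli.ne_zero⟩) hdep hc hp hon hv
  have hle := finrank_le_four_of_free_derivModule hoff T hT
  simp at hle

/-- The derivation module of 𝒜₂₃₉ is not a free `S`-module. -/
theorem not_free_A239 : ¬ Module.Free S4 ↥(derivModule A239) := by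
  refine not_free_derivModule_of_circuit (e := ![4, 0, 1, 2]) (c := 1) (p := ![0, 0, 0, 1])
    ?_ ?_ ?_ ?_ ?_ ?_
  · exact fun h ↦ one_ne_zero (congrFun h 3)
  · convert (Pi.basisFun ℂ (Fin 4)).linearIndependent.comp _ (Fin.castSucc_injective 3) using 1
    ext k m
    fin_cases k <;> fin_cases m <;> simp [A239]
  · ext m
    fin_cases m <;> simp [A239, Fin.sum_univ_three]
  · simp
  · intro k
    fin_cases k <;> simp [A239]
  · intro H hH
    fin_cases H <;> simp_all [A239]
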